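/- Separation theorem, converse part under the source strong converse property (Theorem 6.5, part 2, source version, spectral form). Let V = {Vⁿ} be a general source satisfying H̄(V) = H_(V), and let W = {Wⁿ} be a general channel. If V is transmissible over W, then H̄(V) ≤ sup_X I_(X;Y), where the supremum is over all channel inputs X = {Xⁿ} and Yⁿ is the channel output of Wⁿ on input Xⁿ. -/

import Mathlib

/-!
Encode with `φ` and use as channel input the law of `φ(V)`. Split the event that the information
density of `(V, Y)` is below `s` according to whether the self-information of `V` is below `t` and
whether the decoder errs. On what remains, `P(v) W(y | φ(v)) ≤ exp (s - t) P_Y(y)`, while correct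
decoding makes `v` a function of `y`; summing over `y`, what remains has probability at most
`exp (s - t)`. With `s = n c` and `t = n d` for `c < d` this vanishes, so any level `d` that the
entropy spectrum eventually exceeds forces the information spectrum to exceed every `c < d`.
Hence `H_(V) ≤ I_(X;Y)`, and the strong converse property replaces `H_(V)` by `H̄(V)`.
-/

open Filter Real Topology

namespace ISC

/-- Words of length `n` over alphabet `A`. -/
abbrev Word (A : Type*) (n : ℕ) : Type _ := Fin n → A

/-- `p` is a probability mass function. -/
def IsPMF {α : Type*} (p : α → ℝ) : Prop :=
  (∀ a, 0 ≤ p a) ∧ HasSum p 1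

/-- Probability of the event `S` under the pmf `p`. -/
noncomputable def prob {α : Type*} (p : α → ℝ) (S : Set α) : ℝ :=
  ∑' a, S.indicator p a

/-- Output marginal `P_{Yⁿ}` of the channel `W` fed with the joint input law `P_{VⁿXⁿ}`. -/
noncomputable def outDist {𝒱 𝒳 𝒴 : Type*} {n : ℕ}
    (PVX : Word 𝒱 n × Word 𝒳 n → ℝ) (W : Word 𝒳 n → Word 𝒴 n → ℝ)
    (y : Word 𝒴 n) : ℝ :=
  ∑' vx : Word 𝒱 n × Word 𝒳 n, PVX vx * W vx.2 y

/-- Joint law of `(Vⁿ, Xⁿ, Yⁿ)`: `P_{VⁿXⁿ}(v,x) · Wⁿ(y|x)`. -/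
noncomputable def jointLaw {𝒱 𝒳 𝒴 : Type*} {n : ℕ}
    (PVX : Word 𝒱 n × Word 𝒳 n → ℝ) (W : Word 𝒳 n → Word 𝒴 n → ℝ) :
    Word 𝒱 n × Word 𝒳 n × Word 𝒴 n → ℝ :=
  fun z => PVX (z.1, z.2.1) * W z.2.1 z.2.2

/-- The joint input law `P_{VⁿXⁿ}` induced by the deterministic encoder `φ`:
`P_{Vⁿ}(v) 1{x = φ(v)}`. -/
noncomputable def codeInput {𝒱 𝒳 : Type*} [DecidableEq 𝒳] {n : ℕ} (PV : Word 𝒱 n → ℝ)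
    (φ : Word 𝒱 n → Word 𝒳 n) : Word 𝒱 n × Word 𝒳 n → ℝ :=
  fun vx => if vx.2 = φ vx.1 then PV vx.1 else 0

/-- Error probability `εₙ` of the joint source-channel code `(φ, ψ)`. -/
noncomputable def errProb {𝒱 𝒳 𝒴 : Type*} {n : ℕ}
    (PV : Word 𝒱 n → ℝ) (W : Word 𝒳 n → Word 𝒴 n → ℝ)
    (φ : Word 𝒱 n → Word 𝒳 n) (ψ : Word 𝒴 n → Word 𝒱 n) : ℝ :=
  ∑' v, PV v * prob (W (φ v)) {y | ψ y ≠ v}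

/-- `V` is transmissible over `W`. -/
def Transmissible {𝒱 𝒳 𝒴 : Type*} (PV : (n : ℕ) → Word 𝒱 n → ℝ)
    (W : (n : ℕ) → Word 𝒳 n → Word 𝒴 n → ℝ) : Prop :=
  ∃ (φ : (n : ℕ) → Word 𝒱 n → Word 𝒳 n) (ψ : (n : ℕ) → Word 𝒴 n → Word 𝒱 n),
    Tendsto (fun n => errProb (PV n) (W n) (φ n) (ψ n)) atTop (nhds 0)

/-- Output marginal of the channel `W` for an input distribution `P_{Xⁿ}`. -/
noncomputable def outDistX {𝒳 𝒴 : Type*} {n : ℕ}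
    (PX : Word 𝒳 n → ℝ) (W : Word 𝒳 n → Word 𝒴 n → ℝ) (y : Word 𝒴 n) : ℝ :=
  ∑' x : Word 𝒳 n, PX x * W x y

/-- Joint law of `(Xⁿ, Yⁿ)`: `P_{Xⁿ}(x) · Wⁿ(y|x)`. -/
noncomputable def jointXY {𝒳 𝒴 : Type*} {n : ℕ}
    (PX : Word 𝒳 n → ℝ) (W : Word 𝒳 n → Word 𝒴 n → ℝ) :
    Word 𝒳 n × Word 𝒴 n → ℝ :=
  fun z => PX z.1 * W z.1 z.2

/-- Limit superior in probability of a sequence of random variables `Z i`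
distributed according to the pmfs `p i`. -/
noncomputable def plimsup {α : ℕ → Type*} (p : (i : ℕ) → α i → ℝ)
    (Z : (i : ℕ) → α i → ℝ) : EReal :=
  sInf {β : EReal |
    Tendsto (fun i => prob (p i) {a | β < (Z i a : EReal)}) atTop (nhds 0)}

/-- Limit inferior in probability of a sequence of random variables `Z i`
distributed according to the pmfs `p i`. -/
noncomputable def pliminf {α : ℕ → Type*} (p : (i : ℕ) → α i → ℝ)
    (Z : (i : ℕ) → α i → ℝ) : EReal :=
  sSup {β : EReal |
    Tendsto (fun i => prob (p i) {a | (Z i a : EReal) < β}) atTop (nhds 0)}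

/-- Spectral sup-entropy rate `H̄(V)`. -/
noncomputable def Hbar {𝒱 : Type*} (PV : (n : ℕ) → Word 𝒱 n → ℝ) : EReal :=
  plimsup (fun n => PV n) (fun n v => (1 / (n : ℝ)) * Real.log (1 / PV n v))

/-- Spectral inf-entropy rate `H_(V)`. -/
noncomputable def Hlow {𝒱 : Type*} (PV : (n : ℕ) → Word 𝒱 n → ℝ) : EReal :=
  pliminf (fun n => PV n) (fun n v => (1 / (n : ℝ)) * Real.log (1 / PV n v))

/-- Spectral inf-information rate `I_(X;Y)` of the channel `W` with input `X`. -/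
noncomputable def Ilow {𝒳 𝒴 : Type*} (PX : (n : ℕ) → Word 𝒳 n → ℝ)
    (W : (n : ℕ) → Word 𝒳 n → Word 𝒴 n → ℝ) : EReal :=
  pliminf (fun n => jointXY (PX n) (W n))
    (fun n z => (1 / (n : ℝ)) * Real.log (W n z.1 z.2 / outDistX (PX n) (W n) z.2))

/-- Spectral sup-information rate `Ī(X;Y)` of the channel `W` with input `X`. -/
noncomputable def Ihigh {𝒳 𝒴 : Type*} (PX : (n : ℕ) → Word 𝒳 n → ℝ)
    (W : (n : ℕ) → Word 𝒳 n → Word 𝒴 n → ℝ) : EReal :=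
  plimsup (fun n => jointXY (PX n) (W n))
    (fun n z => (1 / (n : ℝ)) * Real.log (W n z.1 z.2 / outDistX (PX n) (W n) z.2))

/-- `sup_X I_(X;Y)`: the supremum over all channel inputs. -/
noncomputable def supIlow {𝒳 𝒴 : Type*}
    (W : (n : ℕ) → Word 𝒳 n → Word 𝒴 n → ℝ) : EReal :=
  ⨆ PX : {PX : (n : ℕ) → Word 𝒳 n → ℝ // ∀ n, IsPMF (PX n)}, Ilow PX.1 W

lemma mul_le_exp_sub_mul_of_log {x w y s t : ℝ} (hx : 0 ≤ x) (hw : 0 ≤ w) (hy : x * w ≤ y)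
    (hs : Real.log (w / y) < s) (ht : t ≤ Real.log (1 / x)) :
    x * w ≤ Real.exp (s - t) * y := by
  obtain hzero | hpos := (mul_nonneg hx hw).eq_or_lt
  · rw [← hzero]
    exact mul_nonneg (Real.exp_pos _).le (hzero.trans_le hy)
  have hx' : 0 < x := pos_of_mul_pos_left hpos hw
  have hw' : 0 < w := pos_of_mul_pos_right hpos hx
  have hy' : 0 < y := hpos.trans_le hy
  have hw_le : w ≤ Real.exp s * y :=
    ((div_lt_iff₀ hy').1 ((Real.log_lt_iff_lt_exp (div_pos hw' hy')).1 hs)).le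
  have hx_le : x ≤ Real.exp (-t) := by
    rw [one_div, Real.log_inv] at ht
    exact (Real.log_le_iff_le_exp hx').1 (le_neg.1 ht)
  calc x * w ≤ Real.exp (-t) * (Real.exp s * y) := by gcongr
    _ = Real.exp (s - t) * y := by rw [← mul_assoc, ← Real.exp_add, neg_add_eq_sub]

section Prob

variable {α β : Type*} {p : α → ℝ}

lemma prob_nonneg (hp : ∀ a, 0 ≤ p a) (S : Set α) : 0 ≤ prob p S :=
  tsum_nonneg fun _ ↦ Set.indicator_nonneg (fun a _ ↦ hp a) _

lemma prob_mono (hp : IsPMF p) {S T : Set α} (hST : S ⊆ T) : prob p S ≤ prob p T :=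
  Summable.tsum_le_tsum (Set.indicator_le_indicator_of_subset hST hp.1)
    (hp.2.summable.indicator S) (hp.2.summable.indicator T)

lemma prob_univ (hp : IsPMF p) : prob p Set.univ = 1 := by
  simpa only [prob, Set.indicator_univ] using hp.2.tsum_eq

lemma prob_le_one (hp : IsPMF p) (S : Set α) : prob p S ≤ 1 :=
  (prob_mono hp S.subset_univ).trans_eq (prob_univ hp)

lemma IsPMF.le_one (hp : IsPMF p) (a : α) : p a ≤ 1 :=
  le_hasSum hp.2 a fun b _ ↦ hp.1 b

lemma prob_union_le (hp : IsPMF p) (S T : Set α) : prob p (S ∪ T) ≤ prob p S + prob p T := by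
  have hS := hp.2.summable.indicator S
  have hT := hp.2.summable.indicator T
  rw [prob, prob, prob, ← hS.tsum_add hT]
  refine Summable.tsum_le_tsum (fun a ↦ ?_) (hp.2.summable.indicator _) (hS.add hT)
  rw [← Set.indicator_union_add_inter_apply]
  exact le_add_of_nonneg_right (Set.indicator_nonneg (fun a _ ↦ hp.1 a) a)

lemma IsPMF.summable_mul (hp : IsPMF p) {g : α → ℝ} (hg₀ : ∀ a, 0 ≤ g a) (hg₁ : ∀ a, g a ≤ 1) :
    Summable fun a ↦ p a * g a :=
  hp.2.summable.of_nonneg_of_le (fun a ↦ mul_nonneg (hp.1 a) (hg₀ a))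
    fun a ↦ mul_le_of_le_one_right (hp.1 a) (hg₁ a)

lemma prob_le_of_injOn {q : β → ℝ} (hp : Summable p) (hq : IsPMF q) {S : Set α} {g : α → β}
    (hg : S.InjOn g) {r : ℝ} (hr : 0 ≤ r) (hle : ∀ a ∈ S, p a ≤ r * q (g a)) :
    prob p S ≤ r :=
  calc prob p S = ∑' a : S, p a := (tsum_subtype S p).symm
    _ ≤ ∑' b, r * q b :=
      Summable.tsum_le_tsum_of_inj (S.domRestrict g) hg.injective
        (fun b _ ↦ mul_nonneg hr (hq.1 b)) (fun a ↦ hle a a.2) (hp.subtype S)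
        (hq.2.summable.mul_left r)
    _ = r := by rw [tsum_mul_left, hq.2.tsum_eq, mul_one]

end Prob

section Channel

variable {α β γ : Type*}

/-- The law of `f a` when `a` has law `p`; for an encoder `f` it is the channel input law induced
by the source `p`. -/
noncomputable def pushforward (f : α → β) (p : α → ℝ) (b : β) : ℝ :=
  prob p (f ⁻¹' {b})

/-- The joint law of the input and the output of the channel `W` with input law `p`. This is
`jointXY` for arbitrary alphabets in place of words. -/
def compProd (p : α → ℝ) (W : α → β → ℝ) (z : α × β) : ℝ :=
  p z.1 * W z.1 z.2

/-- The output law of the channel `W` with input law `p`. This is `outDistX` for arbitrary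
alphabets in place of words. -/
noncomputable def output (p : α → ℝ) (W : α → β → ℝ) (b : β) : ℝ :=
  ∑' a, p a * W a b

/-- The self-information (entropy density) of `a` under the law `p`, whose normalized spectrum
defines `Hbar` and `Hlow`. It takes the junk value `0` where `p a = 0`. -/
noncomputable def selfInfo (p : α → ℝ) (a : α) : ℝ :=
  Real.log (1 / p a)

/-- The information density of an input-output pair of the channel `W` with input law `p`, whose
normalized spectrum defines `Ilow`. It takes the junk value `0` where `W` or the output law
vanishes. -/
noncomputable def infoDensity (p : α → ℝ) (W : α → β → ℝ) (z : α × β) : ℝ :=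
  Real.log (W z.1 z.2 / output p W z.2)

lemma hasSum_pushforward_mul {p : α → ℝ} {f : α → β} {g : β → ℝ}
    (h : Summable fun a ↦ p a * g (f a)) :
    HasSum (fun b ↦ pushforward f p b * g b) (∑' a, p a * g (f a)) := by
  have hfiber (b : β) : ∑' a : f ⁻¹' {b}, p a * g (f a) = pushforward f p b * g b := by
    rw [pushforward, prob, ← tsum_subtype, ← tsum_mul_right]
    exact tsum_congr fun a ↦ by rw [show f a = b from a.2]
  simpa only [hfiber] using h.hasSum.tsum_fiberwise f

lemma IsPMF.pushforward {p : α → ℝ} (hp : IsPMF p) (f : α → β) : IsPMF (pushforward f p) := by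
  have hsum := hasSum_pushforward_mul (p := p) (f := f) (g := fun _ ↦ 1)
    (by simpa only [mul_one] using hp.2.summable)
  simp only [mul_one] at hsum
  rw [hp.2.tsum_eq] at hsum
  exact ⟨fun b ↦ prob_nonneg hp.1 _, hsum⟩

variable {p : α → ℝ} {W : α → β → ℝ}

lemma IsPMF.compProd (hp : IsPMF p) (hW : ∀ a, IsPMF (W a)) : IsPMF (compProd p W) := by
  have hnonneg (z : α × β) : 0 ≤ ISC.compProd p W z := mul_nonneg (hp.1 _) ((hW _).1 _)
  have hfiber (a : α) : HasSum (fun b ↦ ISC.compProd p W (a, b)) (p a) := by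
    simpa only [ISC.compProd, mul_one] using (hW a).2.mul_left (p a)
  have hsummable : Summable (ISC.compProd p W) :=
    (summable_prod_of_nonneg hnonneg).2
      ⟨fun a ↦ (hfiber a).summable, by simpa only [(hfiber _).tsum_eq] using hp.2.summable⟩
  exact ⟨hnonneg, (hsummable.hasSum.prod_fiberwise hfiber).unique hp.2 ▸ hsummable.hasSum⟩

lemma prob_compProd (hp : IsPMF p) (hW : ∀ a, IsPMF (W a)) (S : Set (α × β)) :
    prob (compProd p W) S = ∑' a, p a * prob (W a) (Prod.mk a ⁻¹' S) := by
  rw [prob, ((hp.compProd hW).2.summable.indicator S).tsum_prod]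
  refine tsum_congr fun a ↦ ?_
  rw [prob, ← tsum_mul_left]
  refine tsum_congr fun b ↦ ?_
  classical simp only [Set.indicator_apply, Set.mem_preimage, compProd, mul_ite, mul_zero]

lemma prob_compProd_preimage_fst (hp : IsPMF p) (hW : ∀ a, IsPMF (W a)) (S : Set α) :
    prob (compProd p W) (Prod.fst ⁻¹' S) = prob p S := by
  classical
  rw [prob_compProd hp hW, prob]
  refine tsum_congr fun a ↦ ?_
  by_cases ha : a ∈ S
  · have : Prod.mk a ⁻¹' (Prod.fst ⁻¹' S) = (Set.univ : Set β) := by ext; simpa using ha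
    rw [this, prob_univ (hW a), mul_one, Set.indicator_of_mem ha]
  · have : Prod.mk a ⁻¹' (Prod.fst ⁻¹' S) = (∅ : Set β) := by ext; simpa using ha
    simp [this, prob, ha]

lemma hasSum_output (hp : IsPMF p) (hW : ∀ a, IsPMF (W a)) (b : β) :
    HasSum (fun a ↦ p a * W a b) (output p W b) :=
  (hp.summable_mul (fun a ↦ (hW a).1 b) fun a ↦ (hW a).le_one b).hasSum

lemma IsPMF.output (hp : IsPMF p) (hW : ∀ a, IsPMF (W a)) : IsPMF (output p W) :=
  ⟨fun b ↦ (hasSum_output hp hW b).nonneg fun a ↦ mul_nonneg (hp.1 a) ((hW a).1 b),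
    ((Equiv.prodComm β α).hasSum_iff.2 (hp.compProd hW).2).prod_fiberwise (hasSum_output hp hW)⟩

lemma compProd_le_output (hp : IsPMF p) (hW : ∀ a, IsPMF (W a)) (z : α × β) :
    compProd p W z ≤ output p W z.2 :=
  le_hasSum (hasSum_output hp hW z.2) z.1 fun a _ ↦ mul_nonneg (hp.1 a) ((hW a).1 z.2)

variable {f : γ → α} {q : γ → ℝ}

lemma output_pushforward (hq : IsPMF q) (hW : ∀ a, IsPMF (W a)) :
    output (pushforward f q) W = output q (W ∘ f) :=
  funext fun b ↦ (hasSum_pushforward_mul (g := (W · b))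
    (hasSum_output hq (fun c ↦ hW (f c)) b).summable).tsum_eq

lemma infoDensity_pushforward (hq : IsPMF q) (hW : ∀ a, IsPMF (W a)) (z : γ × β) :
    infoDensity (pushforward f q) W (Prod.map f id z) = infoDensity q (W ∘ f) z := by
  simp only [infoDensity, output_pushforward hq hW, Prod.map_fst, Prod.map_snd, id,
    Function.comp_apply]

lemma prob_compProd_pushforward (hq : IsPMF q) (hW : ∀ a, IsPMF (W a)) (S : Set (α × β)) :
    prob (compProd (pushforward f q) W) S =
      prob (compProd q (W ∘ f)) (Prod.map f id ⁻¹' S) := by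
  rw [prob_compProd (hq.pushforward f) hW, prob_compProd (W := W ∘ f) hq fun c ↦ hW (f c)]
  exact (hasSum_pushforward_mul (f := f) (g := fun a ↦ prob (W a) (Prod.mk a ⁻¹' S))
    (hq.summable_mul (fun _ ↦ prob_nonneg (hW _).1 _) fun _ ↦ prob_le_one (hW _) _)).tsum_eq

end Channel

section OneShot

variable {α β γ : Type*} {p : α → ℝ}

lemma prob_infoDensity_lt_and_decoded_le {W : α → β → ℝ} (hp : IsPMF p)
    (hW : ∀ a, IsPMF (W a)) (ψ : β → α) (s t : ℝ) :
    prob (compProd p W) {z | infoDensity p W z < s ∧ t ≤ selfInfo p z.1 ∧ ψ z.2 = z.1} ≤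
      Real.exp (s - t) := by
  refine prob_le_of_injOn (hp.compProd hW).2.summable (hp.output hW) (g := Prod.snd) ?_
    (Real.exp_pos _).le fun z hz ↦ mul_le_exp_sub_mul_of_log (hp.1 _) ((hW _).1 _)
      (compProd_le_output hp hW z) hz.1 hz.2.1
  rintro z ⟨-, -, hz⟩ z' ⟨-, -, hz'⟩ hsnd
  exact Prod.ext (by rw [← hz, ← hz', hsnd]) hsnd

lemma prob_infoDensity_lt_le {W : α → β → ℝ} (hp : IsPMF p) (hW : ∀ a, IsPMF (W a))
    (ψ : β → α) (s t : ℝ) :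
    prob (compProd p W) {z | infoDensity p W z < s} ≤
      prob p {a | selfInfo p a < t} + ∑' a, p a * prob (W a) {b | ψ b ≠ a} +
        Real.exp (s - t) := by
  have hJ := hp.compProd hW
  set low : Set (α × β) := Prod.fst ⁻¹' {a | selfInfo p a < t}
  set err : Set (α × β) := {z | ψ z.2 ≠ z.1}
  set rest : Set (α × β) := {z | infoDensity p W z < s ∧ t ≤ selfInfo p z.1 ∧ ψ z.2 = z.1}
  have hcover : {z | infoDensity p W z < s} ⊆ low ∪ err ∪ rest := by
    intro z hz
    by_cases hlow : z ∈ low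
    · exact .inl (.inl hlow)
    by_cases herr : z ∈ err
    · exact .inl (.inr herr)
    · exact .inr ⟨hz, not_lt.1 hlow, not_not.1 herr⟩
  calc prob (compProd p W) {z | infoDensity p W z < s}
      ≤ prob (compProd p W) (low ∪ err ∪ rest) := prob_mono hJ hcover
    _ ≤ prob (compProd p W) low + prob (compProd p W) err + prob (compProd p W) rest :=
        (prob_union_le hJ _ _).trans (by gcongr; exact prob_union_le hJ _ _)
    _ ≤ _ := by
        rw [prob_compProd_preimage_fst hp hW, prob_compProd hp hW err]
        exact add_le_add_right (prob_infoDensity_lt_and_decoded_le hp hW ψ s t) _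

lemma prob_infoDensity_pushforward_lt_le {W : β → γ → ℝ} (hp : IsPMF p)
    (hW : ∀ b, IsPMF (W b)) (φ : α → β) (ψ : γ → α) (s t : ℝ) :
    prob (compProd (pushforward φ p) W) {z | infoDensity (pushforward φ p) W z < s} ≤
      prob p {a | selfInfo p a < t} + ∑' a, p a * prob (W (φ a)) {c | ψ c ≠ a} +
        Real.exp (s - t) := by
  rw [prob_compProd_pushforward hp hW]
  simp only [Set.preimage_ofPred_eq, infoDensity_pushforward hp hW]
  exact prob_infoDensity_lt_le (W := W ∘ φ) hp (fun a ↦ hW (φ a)) ψ s t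

end OneShot

lemma pliminf_le_pliminf {α β : ℕ → Type*} {p : (n : ℕ) → α n → ℝ} {q : (n : ℕ) → β n → ℝ}
    {Y : (n : ℕ) → α n → ℝ} {Z : (n : ℕ) → β n → ℝ} (hp : ∀ n, IsPMF (p n))
    (hq : ∀ n b, 0 ≤ q n b)
    (h : ∀ c d : ℝ, c < d → ∃ δ : ℕ → ℝ, Tendsto δ atTop (𝓝 0) ∧
      ∀ᶠ n in atTop, prob (q n) {b | Z n b < c} ≤ prob (p n) {a | Y n a < d} + δ n) :
    pliminf p Y ≤ pliminf q Z := by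
  refine sSup_le fun x hx ↦ le_of_forall_lt fun u hu ↦ ?_
  obtain ⟨c, huc, hcx⟩ := EReal.lt_iff_exists_real_btwn.1 hu
  obtain ⟨d, hcd, hdx⟩ := EReal.lt_iff_exists_real_btwn.1 hcx
  obtain ⟨δ, hδ, hle⟩ := h c d (EReal.coe_lt_coe_iff.1 hcd)
  refine huc.trans_le (le_sSup ?_)
  have hlim : Tendsto (fun n ↦ prob (p n) {a | (Y n a : EReal) < x} + δ n) atTop (𝓝 0) := by
    simpa only [add_zero] using Tendsto.add hx hδ
  refine squeeze_zero' (.of_forall fun n ↦ prob_nonneg (hq n) _) ?_ hlim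
  filter_upwards [hle] with n hn
  simp only [EReal.coe_lt_coe_iff]
  refine hn.trans (add_le_add_left (prob_mono (hp n) fun a ha ↦ ?_) _)
  exact (EReal.coe_lt_coe_iff.2 ha).trans hdx

section Coding

variable {𝒱 𝒳 𝒴 : Type*} {PV : (n : ℕ) → Word 𝒱 n → ℝ}
  {W : (n : ℕ) → Word 𝒳 n → Word 𝒴 n → ℝ}

lemma Hlow_le_Ilow_pushforward (hPV : ∀ n, IsPMF (PV n)) (hW : ∀ n x, IsPMF (W n x))
    {φ : (n : ℕ) → Word 𝒱 n → Word 𝒳 n} {ψ : (n : ℕ) → Word 𝒴 n → Word 𝒱 n}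
    (hε : Tendsto (fun n ↦ errProb (PV n) (W n) (φ n) (ψ n)) atTop (𝓝 0)) :
    Hlow PV ≤ Ilow (fun n ↦ pushforward (φ n) (PV n)) W := by
  refine pliminf_le_pliminf hPV (fun n ↦ (((hPV n).pushforward (φ n)).compProd (hW n)).1)
    fun c d hcd ↦
      ⟨fun n ↦ errProb (PV n) (W n) (φ n) (ψ n) + Real.exp (n * c - n * d), ?_, ?_⟩
  · have hexp : Tendsto (fun n : ℕ ↦ Real.exp (n * c - n * d)) atTop (𝓝 0) := by
      simp only [← mul_sub]
      exact Real.tendsto_exp_atBot.comp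
        (tendsto_natCast_atTop_atTop.atTop_mul_const_of_neg (sub_neg.2 hcd))
    simpa only [add_zero] using hε.add hexp
  · filter_upwards [eventually_gt_atTop 0] with n hn
    have hn' : (0 : ℝ) < n := Nat.cast_pos.2 hn
    simp only [one_div (n : ℝ), inv_mul_lt_iff₀ hn', ← add_assoc]
    exact prob_infoDensity_pushforward_lt_le (hPV n) (hW n) (φ n) (ψ n) (n * c) (n * d)

lemma Ilow_le_supIlow {PX : (n : ℕ) → Word 𝒳 n → ℝ} (hPX : ∀ n, IsPMF (PX n)) :
    Ilow PX W ≤ supIlow W := by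
  unfold supIlow
  exact le_iSup_of_le ⟨PX, hPX⟩ le_rfl

end Coding

theorem separation_converse_source_strong_converse_general {𝒱 𝒳 𝒴 : Type*}
    (PV : (n : ℕ) → Word 𝒱 n → ℝ) (hPV : ∀ n, IsPMF (PV n))
    (W : (n : ℕ) → Word 𝒳 n → Word 𝒴 n → ℝ) (hW : ∀ n x, IsPMF (W n x))
    (htrans : Transmissible PV W) :
    Hlow PV ≤ supIlow W := by
  obtain ⟨φ, ψ, hε⟩ := htrans
  exact (Hlow_le_Ilow_pushforward hPV hW hε).trans
    (Ilow_le_supIlow fun n ↦ (hPV n).pushforward (φ n))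

/-- **Separation theorem, converse part under the source strong converse property**
(Theorem 6.5, part 2, source version, spectral form). -/
theorem separation_converse_source_strong_converse
    {𝒱 𝒳 𝒴 : Type} [Countable 𝒱] [Countable 𝒳] [Countable 𝒴]
    (PV : (n : ℕ) → Word 𝒱 n → ℝ) (hPV : ∀ n, IsPMF (PV n))
    (W : (n : ℕ) → Word 𝒳 n → Word 𝒴 n → ℝ) (hW : ∀ n x, IsPMF (W n x))
    (hsc : Hbar PV = Hlow PV)
    (htrans : Transmissible PV W) :
    Hbar PV ≤ supIlow W :=
  hsc.trans_le (separation_converse_source_strong_converse_general PV hPV W hW htrans)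

end ISC
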